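/- Let Σ_A(ℕ) be a topologically mixing, finitely primitive (BIP) countable Markov shift and f : Σ_A(ℕ) → ℝ satisfy the Walters condition with Var_1 f < ∞ and P(f) < ∞. Then for every maximizing measure μ of f, supp(μ) ⊆ Ω(f,σ), where Ω(f,σ) = {x ∈ Σ_A(ℕ) : S_f(x,x) = 0} is the Aubry set. -/

import Mathlib

open Filter Topology MeasureTheory
open scoped ENNReal

/-- The countable Markov shift over alphabet ℕ determined by the 0-1 matrix `A`. -/
def MarkovShift (A : ℕ → ℕ → Bool) : Type :=
  {x : ℕ → ℕ // ∀ i, A (x i) (x (i + 1)) = true}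

namespace MarkovShift

variable {A : ℕ → ℕ → Bool}

instance : TopologicalSpace (MarkovShift A) :=
  instTopologicalSpaceSubtype

instance : MeasurableSpace (MarkovShift A) := borel _

instance : BorelSpace (MarkovShift A) := ⟨rfl⟩

/-- The shift map. -/
def shift (x : MarkovShift A) : MarkovShift A :=
  ⟨fun n => x.1 (n + 1), fun i => x.2 (i + 1)⟩

/-- The cylinder set determined by a finite word. -/
def cylinder (w : List ℕ) : Set (MarkovShift A) :=
  {x | ∀ i : Fin w.length, x.1 i = w.get i}

/-- The cylinder set determined by the first `m` coordinates of `x`. -/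
def cylOf (x : MarkovShift A) (m : ℕ) : Set (MarkovShift A) :=
  {y | ∀ i < m, y.1 i = x.1 i}

/-- A symbol is admissible when its cylinder is nonempty. -/
def Admissible (A : ℕ → ℕ → Bool) (a : ℕ) : Prop :=
  ∃ x : MarkovShift A, x.1 0 = a

/-- Topologically mixing. -/
def TopologicallyMixing (A : ℕ → ℕ → Bool) : Prop :=
  ∀ a b : ℕ, Admissible A a → Admissible A b →
    ∃ N : ℕ, ∀ n ≥ N, ∃ x : MarkovShift A, x.1 0 = a ∧ (shift^[n] x).1 0 = b

/-- Finitely primitive (BIP). -/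
def FinitelyPrimitive (A : ℕ → ℕ → Bool) : Prop :=
  ∃ (K₀ : ℕ) (F : Finset ℕ), ∀ a b : ℕ, Admissible A a → Admissible A b →
    ∃ w : List ℕ, w.length = K₀ ∧ (∀ c ∈ w, c ∈ F) ∧
      List.Chain' (fun u v => A u v = true) (a :: (w ++ [b]))

/-- First coordinate where two distinct points disagree. -/
noncomputable def firstDiff (x y : MarkovShift A) (h : x ≠ y) : ℕ :=
  Nat.find (Function.ne_iff.mp (fun hxy : x.1 = y.1 => h (Subtype.ext hxy)))

open Classical in
/-- The metric `d(x,y) = r^{t(x,y)}`. -/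
noncomputable def dist' (r : ℝ) (x y : MarkovShift A) : ℝ :=
  if h : x = y then 0 else r ^ firstDiff x y h

/-- Birkhoff sum `S_n f`. -/
def birkhoff (f : MarkovShift A → ℝ) (n : ℕ) (x : MarkovShift A) : ℝ :=
  ∑ j ∈ Finset.range n, f (shift^[j] x)

/-- The set of values `|S_n f x - S_n f y|` over pairs agreeing on the first `m` coordinates. -/
def varSet (f : MarkovShift A → ℝ) (n m : ℕ) : Set ℝ :=
  {c | ∃ x y : MarkovShift A, (∀ i < m, x.1 i = y.1 i) ∧ c = |birkhoff f n x - birkhoff f n y|}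

/-- `Var_m (S_n f)`. -/
noncomputable def varBirk (f : MarkovShift A → ℝ) (n m : ℕ) : ℝ := sSup (varSet f n m)

/-- `Var_1 f < ∞`. -/
def Var1Finite (f : MarkovShift A → ℝ) : Prop := BddAbove (varSet f 1 1)

/-- The set whose supremum is `sup_{n ≥ 1} Var_{n+k}(S_n f)`. -/
def waltersSet (f : MarkovShift A → ℝ) (k : ℕ) : Set ℝ :=
  {c | ∃ n, 1 ≤ n ∧ c ∈ varSet f n (n + k)}

/-- `M_k = sup_{n ≥ 1} Var_{n+k}(S_n f)`. -/
noncomputable def waltersSup (f : MarkovShift A → ℝ) (k : ℕ) : ℝ := sSup (waltersSet f k)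

/-- The Walters condition. -/
def SatisfiesWalters (f : MarkovShift A → ℝ) : Prop :=
  (∀ k, 1 ≤ k → BddAbove (waltersSet f k)) ∧
    Tendsto (fun k => waltersSup f k) atTop (𝓝 0)

/-- The partition function `Z_n(f,a) = Σ_{σ^n x = x, x₀ = a} e^{S_n f (x)}`. -/
noncomputable def partitionSum (f : MarkovShift A → ℝ) (n : ℕ) (a : ℕ) : ℝ :=
  ∑' x : {x : MarkovShift A // shift^[n] x = x ∧ x.1 0 = a}, Real.exp (birkhoff f n x.1)

/-- `f` has (finite) Gurevich pressure `p`. -/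
def HasGurevichPressure (f : MarkovShift A → ℝ) (p : ℝ) : Prop :=
  ∀ a : ℕ, Admissible A a →
    (∀ n, 1 ≤ n → Summable fun x : {x : MarkovShift A // shift^[n] x = x ∧ x.1 0 = a} =>
        Real.exp (birkhoff f n x.1)) ∧
    Tendsto (fun n : ℕ => (1 / (n : ℝ)) * Real.log (partitionSum f n a)) atTop (𝓝 p)

/-- σ-invariant Borel probability measure. -/
def IsInvariantProb (μ : Measure (MarkovShift A)) : Prop :=
  IsProbabilityMeasure μ ∧ μ.map shift = μ

/-- `m(f)`, the maximal ergodic average. -/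
noncomputable def mf (f : MarkovShift A → ℝ) : ℝ :=
  sSup {c | ∃ μ : Measure (MarkovShift A),
    IsInvariantProb μ ∧ Integrable f μ ∧ ∫ x, f x ∂μ = c}

/-- A maximizing measure for `f`. -/
def IsMaximizing (f : MarkovShift A → ℝ) (μ : Measure (MarkovShift A)) : Prop :=
  IsInvariantProb μ ∧ Integrable f μ ∧ ∫ x, f x ∂μ = mf f

/-- Bounded real valued function. -/
def BoundedFun (g : MarkovShift A → ℝ) : Prop := ∃ C, ∀ x, |g x| ≤ C

/-- A bounded calibrated sub-action for `f`. -/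
def IsCalibratedSubaction (f V : MarkovShift A → ℝ) : Prop :=
  Continuous V ∧ BoundedFun V ∧
    (∀ x, f x + V x - V (shift x) - mf f ≤ 0) ∧
    (∀ y, ∃ x, shift x = y ∧ f x + V x - V (shift x) - mf f = 0)

/-- The Ruelle transfer operator `(L_g u)(x) = Σ_{σ y = x} e^{g(y)} u(y)`. -/
noncomputable def ruelle (g u : MarkovShift A → ℝ) (x : MarkovShift A) : ℝ :=
  ∑' y : {y : MarkovShift A // shift y = x}, Real.exp (g y.1) * u y.1

/-- Ruelle-Perron-Frobenius data for the potential `f` with pressure `p`: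
eigenfunction `h`, eigenmeasure `ν`. -/
def IsRPF (f : MarkovShift A → ℝ) (p : ℝ) (h : MarkovShift A → ℝ)
    (ν : Measure (MarkovShift A)) : Prop :=
  Continuous h ∧ (∀ x, 0 < h x) ∧
    (∀ x, ruelle f h x = Real.exp p * h x) ∧
    IsProbabilityMeasure ν ∧
    (∀ g : MarkovShift A → ℝ, Continuous g → BoundedFun g →
      ∫ x, ruelle f g x ∂ν = Real.exp p * ∫ x, g x ∂ν) ∧
    ∫ x, h x ∂ν = 1

/-- The Gibbs measure `dμ = h dν`. -/
noncomputable def gibbs (h : MarkovShift A → ℝ) (ν : Measure (MarkovShift A)) :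
    Measure (MarkovShift A) :=
  ν.withDensity fun x => ENNReal.ofReal (h x)

/-- The Mañé potential `S_f(x,y)` (with respect to the metric of parameter `r`). -/
noncomputable def manePot (r : ℝ) (f : MarkovShift A → ℝ) (x y : MarkovShift A) : EReal :=
  ⨅ ε : {ε : ℝ // 0 < ε}, ⨆ n : {n : ℕ // 1 ≤ n},
    ⨆ _z : {z : MarkovShift A // dist' r x z < ε.1 ∧ shift^[n.1] z = y},
      ((birkhoff (fun w => f w - mf f) n.1 _z.1 : ℝ) : EReal)

/-- The (topological) support of a measure. -/
def msupport (μ : Measure (MarkovShift A)) : Set (MarkovShift A) :=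
  {x | ∀ U : Set (MarkovShift A), IsOpen U → x ∈ U → 0 < μ U}

end MarkovShift

namespace MarkovShift


theorem shift_iter_val {A : ℕ → ℕ → Bool} (n : ℕ) (x : MarkovShift A) (i : ℕ) :
    (shift^[n] x).1 i = x.1 (i + n) := by
  induction n generalizing x i with
  | zero => rfl
  | succ n ih =>
    rw [Function.iterate_succ_apply, ih]
    change x.1 (i + n + 1) = _
    rfl

theorem continuous_shift {A : ℕ → ℕ → Bool} : Continuous (shift : MarkovShift A → MarkovShift A) := by
  refine Continuous.subtype_mk ?_ _
  refine continuous_pi fun n => ?_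
  exact (continuous_apply (n + 1)).comp continuous_subtype_val

theorem isOpen_cylOf {A : ℕ → ℕ → Bool} (x : MarkovShift A) (m : ℕ) : IsOpen (cylOf x m) := by
  have : cylOf x m = ⋂ i ∈ Finset.range m, {y : MarkovShift A | y.1 i = x.1 i} := by
    ext y; simp [cylOf]
  rw [this]
  refine isOpen_biInter_finset fun i _ => ?_
  have hc : Continuous (fun y : MarkovShift A => y.1 i) :=
    (continuous_apply i).comp continuous_subtype_val
  exact (isOpen_discrete {x.1 i}).preimage hc

theorem walters_bound {A : ℕ → ℕ → Bool} {f : MarkovShift A → ℝ} (hW : SatisfiesWalters f)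
    {n k : ℕ} (hn : 1 ≤ n) (hk : 1 ≤ k) {x y : MarkovShift A}
    (h : ∀ i < n + k, x.1 i = y.1 i) : |birkhoff f n x - birkhoff f n y| ≤ waltersSup f k :=
  le_csSup (hW.1 k hk) ⟨n, hn, x, y, h, rfl⟩

theorem walters_small {A : ℕ → ℕ → Bool} {f : MarkovShift A → ℝ} (hW : SatisfiesWalters f)
    {δ : ℝ} (hδ : 0 < δ) : ∃ k, 1 ≤ k ∧ ∀ j, k ≤ j → waltersSup f j < δ := by
  have := hW.2.eventually (gt_mem_nhds hδ)
  obtain ⟨k, hk⟩ := eventually_atTop.1 this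
  exact ⟨max k 1, le_max_right _ _, fun j hj => hk j (le_trans (le_max_left _ _) hj)⟩

theorem continuous_of_walters {A : ℕ → ℕ → Bool} {f : MarkovShift A → ℝ}
    (hW : SatisfiesWalters f) : Continuous f := by
  rw [continuous_iff_continuousAt]
  intro x
  rw [ContinuousAt, Metric.tendsto_nhds]
  intro δ hδ
  obtain ⟨k, hk1, hk⟩ := walters_small hW hδ
  have hmem : cylOf x (1 + k) ∈ 𝓝 x := (isOpen_cylOf x _).mem_nhds (fun i _ => rfl)
  filter_upwards [hmem] with y hy
  have := walters_bound hW (n := 1) le_rfl hk1 (x := y) (y := x) hy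
  simp only [birkhoff, Finset.sum_range_one, Function.iterate_zero, id] at this
  rw [Real.dist_eq]
  exact this.trans_lt (hk k le_rfl)

theorem birkhoff_sub_const {A : ℕ → ℕ → Bool} (f : MarkovShift A → ℝ) (c : ℝ) (n : ℕ)
    (x : MarkovShift A) : birkhoff (fun w => f w - c) n x = birkhoff f n x - n * c := by
  simp [birkhoff, Finset.sum_sub_distrib]

theorem birkhoff_succ {A : ℕ → ℕ → Bool} (f : MarkovShift A → ℝ) (n : ℕ)
    (x : MarkovShift A) : birkhoff f (n + 1) x = f x + birkhoff f n (shift x) := by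
  simp only [birkhoff]
  rw [Finset.sum_range_succ', add_comm]
  rfl

/-- closing up a word into a periodic point -/
theorem exists_periodic {A : ℕ → ℕ → Bool} (z : ℕ → ℕ) (n : ℕ) (hn : 1 ≤ n)
    (hA : ∀ i < n, A (z i) (z (i + 1)) = true) (hz : z n = z 0) :
    ∃ q : MarkovShift A, shift^[n] q = q ∧ ∀ i, q.1 i = z (i % n) := by
  have hq : ∀ i, A (z (i % n)) (z ((i + 1) % n)) = true := by
    intro i
    have h1 : i % n < n := Nat.mod_lt _ hn
    by_cases h : i % n + 1 = n
    · have : (i + 1) % n = 0 := by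
        rw [← Nat.mod_add_mod, h, Nat.mod_self]
      rw [this, ← hz]
      have := hA _ h1
      rwa [h] at this
    · have : (i + 1) % n = i % n + 1 := by
        rw [← Nat.mod_add_mod, Nat.mod_eq_of_lt (by omega)]
      rw [this]
      exact hA _ h1
  let q : MarkovShift A := ⟨fun i => z (i % n), hq⟩
  have hqv : ∀ i, q.1 i = z (i % n) := fun i => rfl
  refine ⟨q, ?_, hqv⟩
  apply Subtype.ext
  funext i
  rw [shift_iter_val, hqv, hqv, Nat.add_mod_right]

theorem bip_fun {A : ℕ → ℕ → Bool} {K : ℕ} {F : Finset ℕ} {a b : ℕ} {w : List ℕ}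
    (hl : w.length = K) (hF : ∀ c ∈ w, c ∈ F)
    (hc : List.IsChain (fun u v => A u v = true) (a :: (w ++ [b]))) :
    ∃ u : ℕ → ℕ, u 0 = a ∧ u (K + 1) = b ∧ (∀ i, 0 < i → i ≤ K → u i ∈ F) ∧
      ∀ i ≤ K, A (u i) (u (i + 1)) = true := by
  refine ⟨fun i => (a :: (w ++ [b])).getD i 0, by simp, by simp [← hl], ?_, ?_⟩
  · intro i h0 hi
    obtain ⟨j, rfl⟩ : ∃ j, i = j + 1 := ⟨i - 1, by omega⟩
    apply hF
    have hj : j < w.length := by omega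
    simp [List.getElem?_append, hj]
  · intro i hi
    rw [List.isChain_iff_getElem] at hc
    have := hc i (by simp; omega)
    dsimp only
    rw [List.getD_eq_getElem _ _ (by simp; omega), List.getD_eq_getElem _ _ (by simp; omega)]
    exact this

theorem var1_bound {A : ℕ → ℕ → Bool} {f : MarkovShift A → ℝ} (h : Var1Finite f) :
    ∃ V, ∀ x y : MarkovShift A, x.1 0 = y.1 0 → |f x - f y| ≤ V := by
  obtain ⟨V, hV⟩ := h
  refine ⟨V, fun x y hxy => hV ⟨x, y, ?_, ?_⟩⟩
  · intro i hi
    obtain rfl : i = 0 := by omega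
    exact hxy
  · simp [birkhoff]

theorem finset_lower {A : ℕ → ℕ → Bool} {f : MarkovShift A → ℝ} (h : Var1Finite f)
    (G : Finset ℕ) : ∃ D, ∀ y : MarkovShift A, y.1 0 ∈ G → D ≤ f y := by
  obtain ⟨V, hV⟩ := var1_bound h
  induction G using Finset.induction_on with
  | empty => exact ⟨0, by simp⟩
  | insert c G _ ih =>
    obtain ⟨D, hD⟩ := ih
    by_cases hc : ∃ y : MarkovShift A, y.1 0 = c
    · obtain ⟨y0, hy0⟩ := hc
      refine ⟨min D (f y0 - V), fun y hy => ?_⟩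
      rcases Finset.mem_insert.1 hy with h1 | h1
      · have := (abs_le.1 (hV y y0 (by rw [h1, hy0]))).1
        exact (min_le_right _ _).trans (by linarith)
      · exact (min_le_left _ _).trans (hD y h1)
    · refine ⟨D, fun y hy => ?_⟩
      rcases Finset.mem_insert.1 hy with h1 | h1
      · exact absurd ⟨y, h1⟩ hc
      · exact hD y h1

theorem bounded_above {A : ℕ → ℕ → Bool} {f : MarkovShift A → ℝ}
    (hbip : FinitelyPrimitive A) (hVar1 : Var1Finite f) {p : ℝ}
    (hP : HasGurevichPressure f p) (x : MarkovShift A) : ∃ C, ∀ y, f y ≤ C := by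
  obtain ⟨K, F, hKF⟩ := hbip
  obtain ⟨D, hD⟩ := finset_lower hVar1 (insert (x.1 0) F)
  obtain ⟨V, hV⟩ := var1_bound hVar1
  set n := 2 * (K + 1) with hn
  have hs := (hP (x.1 0) ⟨x, rfl⟩).1 n (by omega)
  refine ⟨partitionSum f n (x.1 0) - (n - 1 : ℕ) * D + V, fun y => ?_⟩
  obtain ⟨w, hw1, hw2, hw3⟩ := hKF (x.1 0) (y.1 0) ⟨x, rfl⟩ ⟨y, rfl⟩
  obtain ⟨w', hw1', hw2', hw3'⟩ := hKF (y.1 0) (x.1 0) ⟨y, rfl⟩ ⟨x, rfl⟩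
  obtain ⟨u, hu0, hu1, hu2, hu3⟩ := bip_fun hw1 hw2 hw3
  obtain ⟨v, hv0, hv1, hv2, hv3⟩ := bip_fun hw1' hw2' hw3'
  obtain ⟨q, hq1, hq2⟩ := exists_periodic (A := A)
    (fun i => if i ≤ K then u i else v (i - (K + 1))) n (by omega) (by
      intro i hi
      by_cases h1 : i + 1 ≤ K
      · simp only [show i ≤ K by omega, h1, if_true]
        exact hu3 i (by omega)
      · by_cases h2 : i ≤ K
        · simp only [h1, h2, if_true, if_false]
          obtain rfl : i = K := by omega
          simp only [Nat.sub_self]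
          rw [hv0, ← hu1]
          exact hu3 _ le_rfl
        · simp only [h1, h2, if_false]
          rw [show i + 1 - (K + 1) = (i - (K + 1)) + 1 by omega]
          exact hv3 _ (by omega)) (by
      simp only [show ¬ n ≤ K by omega, if_false, Nat.zero_le, if_true]
      rw [show n - (K + 1) = K + 1 by omega, hv1, hu0])
  have hq0 : q.1 0 = x.1 0 := by
    rw [hq2]; simp [hu0]
  have hle : birkhoff f n q ≤ partitionSum f n (x.1 0) := by
    have h1 := hs.le_tsum ⟨q, hq1, hq0⟩ (fun j _ => (Real.exp_pos _).le)
    have h2 := Real.add_one_le_exp (birkhoff f n q)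
    have h3 : Real.exp (birkhoff f n q) ≤ partitionSum f n (x.1 0) := h1
    linarith
  have hmem : K + 1 ∈ Finset.range n := Finset.mem_range.2 (by omega)
  have hsum : (n - 1 : ℕ) * D ≤ ∑ j ∈ (Finset.range n).erase (K + 1), f (shift^[j] q) := by
    have := Finset.card_nsmul_le_sum ((Finset.range n).erase (K + 1))
      (fun j => f (shift^[j] q)) D (by
        intro j hj
        rw [Finset.mem_erase, Finset.mem_range] at hj
        apply hD
        rw [shift_iter_val, hq2, zero_add, Nat.mod_eq_of_lt hj.2]
        split_ifs with h
        · rcases Nat.eq_zero_or_pos j with h0 | h0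
          · rw [h0, hu0]; exact Finset.mem_insert_self _ _
          · exact Finset.mem_insert_of_mem (hu2 j h0 h)
        · exact Finset.mem_insert_of_mem (hv2 _ (by omega) (by omega)))
    rwa [Finset.card_erase_of_mem hmem, Finset.card_range, nsmul_eq_mul] at this
  have hdec : f (shift^[K + 1] q) + ∑ j ∈ (Finset.range n).erase (K + 1), f (shift^[j] q)
      = birkhoff f n q := Finset.add_sum_erase _ (fun j => f (shift^[j] q)) hmem
  have hyq : (shift^[K + 1] q).1 0 = y.1 0 := by
    rw [shift_iter_val, hq2, zero_add, Nat.mod_eq_of_lt (by omega)]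
    simp [hv0]
  have := (abs_le.1 (hV _ _ hyq)).1
  linarith

theorem mf_bddAbove {A : ℕ → ℕ → Bool} {f : MarkovShift A → ℝ} {C : ℝ} (hC : ∀ y, f y ≤ C) :
    BddAbove {c | ∃ μ : Measure (MarkovShift A),
      IsInvariantProb μ ∧ Integrable f μ ∧ ∫ x, f x ∂μ = c} := by
  refine ⟨C, ?_⟩
  rintro c ⟨μ, ⟨hp, -⟩, hi, rfl⟩
  have := integral_mono hi (integrable_const C) hC
  simpa using this

theorem le_mf {A : ℕ → ℕ → Bool} {f : MarkovShift A → ℝ} {C : ℝ} (hC : ∀ y, f y ≤ C)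
    {μ : Measure (MarkovShift A)} (h : IsInvariantProb μ) (hi : Integrable f μ) :
    ∫ x, f x ∂μ ≤ mf f :=
  le_csSup (mf_bddAbove hC) ⟨μ, h, hi, rfl⟩

/-- Periodic orbits have nonpositive normalized Birkhoff sums. -/
theorem birkhoff_periodic_le {A : ℕ → ℕ → Bool} {f : MarkovShift A → ℝ} {C : ℝ}
    (hC : ∀ y, f y ≤ C) (hf : Continuous f) {n : ℕ} (hn : 1 ≤ n) {q : MarkovShift A}
    (hq : shift^[n] q = q) : birkhoff f n q ≤ n * mf f := by
  have hms : Measurable (shift : MarkovShift A → MarkovShift A) := continuous_shift.measurable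
  have hn0 : (n : ℝ≥0∞) ≠ 0 := by
    simp; omega
  let ν0 : Measure (MarkovShift A) := ∑ j ∈ Finset.range n, Measure.dirac (shift^[j] q)
  let ν : Measure (MarkovShift A) := (n : ℝ≥0∞)⁻¹ • ν0
  have hu : ν0 Set.univ = n := by simp [ν0]
  have hinv0 : ν0.map shift = ν0 := by
    have h1 : ν0.map shift = ∑ j ∈ Finset.range n, Measure.dirac (shift^[j + 1] q) := by
      simp only [ν0]
      rw [← Measure.mapₗ_apply_of_measurable hms, map_sum]
      refine Finset.sum_congr rfl fun j _ => ?_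
      rw [Measure.mapₗ_apply_of_measurable hms, Measure.map_dirac' hms,
        Function.iterate_succ_apply']
    rw [h1]
    have h2 := Finset.sum_range_succ (fun j => Measure.dirac (shift^[j] q)) n
    have h3 := Finset.sum_range_succ' (fun j => Measure.dirac (shift^[j] q)) n
    rw [h3] at h2
    simp only [hq, Function.iterate_zero, id] at h2
    ext s hs
    have h4 := congrArg (fun m : Measure (MarkovShift A) => m s) h2
    simp only [Measure.add_apply] at h4
    have hfin : (Measure.dirac q) s ≠ ∞ := measure_ne_top _ _
    exact (ENNReal.add_left_inj hfin).1 h4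
  have hinv : IsInvariantProb ν := by
    refine ⟨⟨?_⟩, ?_⟩
    · simp only [ν, Measure.smul_apply, hu, smul_eq_mul]
      exact ENNReal.inv_mul_cancel hn0 (by simp)
    · simp only [ν, Measure.map_smul, hinv0]
  have hid : ∀ j ∈ Finset.range n, Integrable f (Measure.dirac (shift^[j] q)) := by
    intro j _
    exact integrable_dirac' hf.stronglyMeasurable (by simp)
  have hi0 : Integrable f ν0 := integrable_finsetSum_measure.2 hid
  have hi : Integrable f ν := hi0.smul_measure (by simp [hn0])
  have hint : ∫ x, f x ∂ν = (n : ℝ)⁻¹ * birkhoff f n q := by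
    simp only [ν, integral_smul_measure]
    rw [show ∫ x, f x ∂ν0 = birkhoff f n q by
      simp only [ν0]
      rw [integral_finsetSum_measure hid]
      exact Finset.sum_congr rfl fun j _ => integral_dirac' _ _ hf.stronglyMeasurable]
    simp
  have := le_mf hC hinv hi
  rw [hint] at this
  have hnpos : (0 : ℝ) < n := by exact_mod_cast hn
  rwa [inv_mul_le_iff₀ hnpos] at this

/-- Coboundary lemma. -/
theorem integral_nonneg_of_coboundary_le {X : Type*} [MeasurableSpace X] {μ : Measure X}
    [IsFiniteMeasure μ] {T : X → X} (hT : MeasurePreserving T μ μ) {h ψ : X → ℝ}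
    (hh : Measurable h) (hψ : Integrable ψ μ) (hle : ∀ x, h (T x) - h x ≤ ψ x) :
    0 ≤ ∫ x, ψ x ∂μ := by
  let tr : ℕ → ℝ → ℝ := fun M t => max (min t M) (-M)
  have htr : ∀ M, Measurable (tr M) := fun M => by
    simp only [tr]; fun_prop
  have htrb : ∀ M t, |tr M t| ≤ M := by
    intro M t
    have : (0 : ℝ) ≤ M := Nat.cast_nonneg M
    rw [abs_le]
    exact ⟨le_max_right _ _, max_le (min_le_right _ _) (by linarith)⟩
  have hti : ∀ M, Integrable (fun x => tr M (h x)) μ := fun M =>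
    Integrable.of_bound ((htr M).comp hh).aestronglyMeasurable (M : ℝ)
      (Eventually.of_forall fun x => htrb M _)
  have hti2 : ∀ M, Integrable (fun x => tr M (h (T x))) μ := fun M =>
    hT.integrable_comp_of_integrable (hti M)
  let φ : ℕ → X → ℝ := fun M x => max (tr M (h (T x)) - tr M (h x)) (-|ψ x|)
  have hφ0 : ∀ M, 0 ≤ ∫ x, φ M x ∂μ := by
    intro M
    have h1 : ∫ x, (tr M (h (T x)) - tr M (h x)) ∂μ = 0 := by
      rw [integral_sub (hti2 M) (hti M), sub_eq_zero]
      have := integral_map (μ := μ) hT.measurable.aemeasurable (f := fun x => tr M (h x))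
        ((htr M).comp hh).aestronglyMeasurable
      rw [hT.map_eq] at this
      exact this.symm
    rw [← h1]
    refine integral_mono ((hti2 M).sub (hti M)) ?_ (fun x => le_max_left _ _)
    exact ((hti2 M).sub (hti M)).sup hψ.abs.neg
  have hmono : ∀ M s t, s ≤ t → tr M s ≤ tr M t := fun M s t hst =>
    max_le_max (min_le_min hst le_rfl) le_rfl
  have hlip : ∀ (M : ℕ) s t, s ≤ t → tr M t - tr M s ≤ t - s := by
    intro M s t hst
    have : (0 : ℝ) ≤ M := Nat.cast_nonneg M
    simp only [tr]
    rcases max_cases (min t (M : ℝ)) (-M) with h1 | h1 <;>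
    rcases max_cases (min s (M : ℝ)) (-M) with h2 | h2 <;>
    rcases min_cases t (M : ℝ) with h3 | h3 <;>
    rcases min_cases s (M : ℝ) with h4 | h4 <;> linarith
  have hφb : ∀ M x, |φ M x| ≤ |ψ x| := by
    intro M x
    rw [abs_le]
    refine ⟨le_max_right _ _, max_le ?_ (by linarith [abs_nonneg (ψ x)])⟩
    rcases le_total (h (T x)) (h x) with h1 | h1
    · linarith [hmono M _ _ h1, abs_nonneg (ψ x)]
    · linarith [hlip M _ _ h1, hle x, le_abs_self (ψ x)]
  have htend : ∀ t, Tendsto (fun M : ℕ => tr M t) atTop (𝓝 t) := by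
    intro t
    obtain ⟨N, hN⟩ := exists_nat_ge |t|
    refine tendsto_atTop_of_eventually_const (i₀ := N) fun M hM => ?_
    have h1 : (N : ℝ) ≤ M := by exact_mod_cast hM
    have h2 := abs_le.1 (hN.trans h1)
    simp only [tr]
    rw [min_eq_left h2.2, max_eq_left h2.1]
  have hlim := tendsto_integral_of_dominated_convergence (μ := μ) (F := φ)
    (f := fun x => max (h (T x) - h x) (-|ψ x|)) (fun x => |ψ x|)
    (fun M => (((hti2 M).sub (hti M)).sup hψ.abs.neg).aestronglyMeasurable) hψ.abs
    (fun M => Eventually.of_forall fun x => hφb M x)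
    (Eventually.of_forall fun x =>
      ((htend _).sub (htend _)).max tendsto_const_nhds)
  have h0 : 0 ≤ ∫ x, max (h (T x) - h x) (-|ψ x|) ∂μ :=
    ge_of_tendsto' hlim hφ0
  have hmeas : AEStronglyMeasurable (fun x => max (h (T x) - h x) (-|ψ x|)) μ :=
    ((hh.comp hT.measurable).sub hh).aestronglyMeasurable.sup hψ.abs.neg.aestronglyMeasurable
  have hint : Integrable (fun x => max (h (T x) - h x) (-|ψ x|)) μ := by
    refine hψ.abs.mono' hmeas (Eventually.of_forall fun x => ?_)
    rw [Real.norm_eq_abs, abs_le]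
    exact ⟨le_max_right _ _, max_le ((hle x).trans (le_abs_self _))
      (by linarith [abs_nonneg (ψ x)])⟩
  exact h0.trans (integral_mono hint hψ fun x => max_le (hle x) (neg_abs_le _))

theorem setIntegral_le_of_invariant {A : ℕ → ℕ → Bool} {f : MarkovShift A → ℝ} {C : ℝ}
    (hC : ∀ y, f y ≤ C) {μ : Measure (MarkovShift A)} (hμ : IsInvariantProb μ)
    (hi : Integrable f μ) {B : Set (MarkovShift A)} (hB : MeasurableSet B)
    (hinv : shift ⁻¹' B = B) : ∫ x in B, (f x - mf f) ∂μ ≤ 0 := by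
  have hms : Measurable (shift : MarkovShift A → MarkovShift A) := continuous_shift.measurable
  haveI := hμ.1
  by_cases h0 : μ B = 0
  · rw [Measure.restrict_eq_zero.2 h0]; simp
  have htop : μ B ≠ ∞ := measure_ne_top _ _
  have hprob : IsInvariantProb ((μ B)⁻¹ • μ.restrict B) := by
    refine ⟨⟨?_⟩, ?_⟩
    · simp only [Measure.smul_apply, smul_eq_mul, Measure.restrict_apply_univ]
      exact ENNReal.inv_mul_cancel h0 htop
    · rw [Measure.map_smul]
      congr 1
      have := Measure.restrict_map (μ := μ) hms hB
      rw [hμ.2, hinv] at this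
      exact this.symm
  have hi' : Integrable f ((μ B)⁻¹ • μ.restrict B) :=
    hi.restrict.smul_measure (by simp [h0])
  have h1 := le_mf hC hprob hi'
  rw [integral_smul_measure, ENNReal.toReal_inv, smul_eq_mul] at h1
  have hpos : 0 < (μ B).toReal := ENNReal.toReal_pos h0 htop
  rw [inv_mul_le_iff₀ hpos] at h1
  rw [integral_sub hi.restrict (integrable_const _)]
  simp only [integral_const, smul_eq_mul, Measure.real, Measure.restrict_apply_univ]
  linarith

theorem exists_return {A : ℕ → ℕ → Bool} {f : MarkovShift A → ℝ} {C : ℝ}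
    (hC : ∀ y, f y ≤ C) (hf : Continuous f) {μ : Measure (MarkovShift A)}
    (hμ : IsMaximizing f μ) {U : Set (MarkovShift A)} (hU : MeasurableSet U) (hpos : 0 < μ U)
    {ε : ℝ} (hε : 0 < ε) :
    ∃ w ∈ U, ∃ n, 1 ≤ n ∧ shift^[n] w ∈ U ∧ -ε ≤ birkhoff (fun w => f w - mf f) n w := by
  classical
  by_contra hcon
  push Not at hcon
  obtain ⟨hinv, hi, hmax⟩ := hμ
  haveI := hinv.1
  have hms : Measurable (shift : MarkovShift A → MarkovShift A) := continuous_shift.measurable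
  have hT : MeasurePreserving (shift : MarkovShift A → MarkovShift A) μ μ := ⟨hms, hinv.2⟩
  set g : MarkovShift A → ℝ := fun w => f w - mf f with hg
  have hgm : Measurable g := hf.measurable.sub_const _
  have hgi : Integrable g μ := hi.sub (integrable_const _)
  let B : Set (MarkovShift A) := {x | ∃ᶠ n in atTop, shift^[n] x ∈ U}
  have hBdef : B = ⋂ N : ℕ, ⋃ n : ℕ, ⋃ _ : N ≤ n, shift^[n] ⁻¹' U := by
    ext x
    simp [B, frequently_atTop]
  have hB : MeasurableSet B := by
    rw [hBdef]
    exact MeasurableSet.iInter fun N => MeasurableSet.iUnion fun n =>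
      MeasurableSet.iUnion fun _ => (hms.iterate n) hU
  have hBiff : ∀ x, shift x ∈ B ↔ x ∈ B := by
    intro x
    have h1 : shift x ∈ B ↔ ∃ᶠ n in atTop, shift^[n + 1] x ∈ U := Iff.rfl
    rw [h1]
    change _ ↔ ∃ᶠ n in atTop, shift^[n] x ∈ U
    have h2 := Filter.frequently_map (f := (atTop : Filter ℕ)) (m := fun n => n + 1)
      (P := fun n => shift^[n] x ∈ U)
    rw [map_add_atTop_eq_nat 1] at h2
    exact h2.symm
  have hBinv : shift ⁻¹' B = B := by
    ext x; exact hBiff x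
  have hBex : ∀ x ∈ B, ∃ n, shift^[n] x ∈ U := fun x hx => hx.exists
  -- hitting time
  let N : MarkovShift A → ℕ := fun x => if hx : x ∈ B then Nat.find (hBex x hx) else 0
  have hNmem : ∀ x ∈ B, shift^[N x] x ∈ U := by
    intro x hx
    simp only [N, hx, dif_pos]
    exact Nat.find_spec (hBex x hx)
  have hNU : ∀ x ∈ U, N x = 0 := by
    intro x hx
    simp only [N]
    split_ifs with h
    · rw [Nat.find_eq_zero]; exact hx
    · rfl
  have hNs : ∀ x ∈ B, x ∉ U → N x = N (shift x) + 1 := by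
    intro x hx hxU
    have hx' := (hBiff x).2 hx
    simp only [N, hx, hx', dif_pos]
    exact Nat.find_comp_succ (hBex x hx) (hBex _ hx') hxU
  have hNm : Measurable N := by
    refine measurable_to_countable' fun n => ?_
    have : N ⁻¹' {n} = (B ∩ (shift^[n] ⁻¹' U ∩ ⋂ m : ℕ, ⋂ _ : m < n, (shift^[m] ⁻¹' U)ᶜ))
        ∪ (Bᶜ ∩ {_x | n = 0}) := by
      ext x
      by_cases hx : x ∈ B
      · simp [N, hx, Nat.find_eq_iff]
      · simp [N, hx, eq_comm]
    rw [this]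
    refine (hB.inter (((hms.iterate n) hU).inter ?_)).union (hB.compl.inter ?_)
    · exact MeasurableSet.iInter fun m => MeasurableSet.iInter fun _ =>
        ((hms.iterate m) hU).compl
    · exact MeasurableSet.const _
  have hbm : ∀ n, Measurable (birkhoff g n) := by
    intro n
    unfold birkhoff
    exact Finset.measurable_sum _ fun j _ => hgm.comp (hms.iterate j)
  let h : MarkovShift A → ℝ := fun x => birkhoff g (N x) x
  have hh : Measurable h := by
    have h1 : Measurable (fun q : ℕ × MarkovShift A => birkhoff g q.1 q.2) :=
      measurable_from_prod_countable_right fun n => hbm n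
    exact h1.comp (hNm.prodMk measurable_id)
  let ψ : MarkovShift A → ℝ := fun x => B.indicator (fun x => - g x) x
    - (B ∩ U).indicator (fun _ => ε) x
  have hψ1 : Integrable (B.indicator (fun x => - g x)) μ := hgi.neg.indicator hB
  have hψ2 : Integrable ((B ∩ U).indicator (fun _ => ε)) μ :=
    (integrable_const ε).indicator (hB.inter hU)
  have hle : ∀ x, h (shift x) - h x ≤ ψ x := by
    intro x
    by_cases hx : x ∈ B
    · by_cases hxU : x ∈ U
      · have hhx : h x = 0 := by simp [h, hNU x hxU, birkhoff]
        have h1 := hcon x hxU (N (shift x) + 1) (by omega) (by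
          rw [Function.iterate_succ_apply]
          exact hNmem _ ((hBiff x).2 hx))
        rw [birkhoff_succ] at h1
        simp only [ψ, Set.indicator, hx, hxU, Set.mem_inter_iff, and_self, if_true, hhx, h]
        linarith
      · have hhx : h x = g x + h (shift x) := by
          simp only [h]
          rw [hNs x hx hxU, birkhoff_succ]
        simp only [ψ, Set.indicator, hx, hxU, Set.mem_inter_iff, and_false, if_true, if_false]
        linarith
    · have hx' : shift x ∉ B := fun h' => hx ((hBiff x).1 h')
      simp [ψ, h, N, hx, hx', birkhoff]
  have hkey := integral_nonneg_of_coboundary_le hT hh (hψ1.sub hψ2) hle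
  have hval : ∫ x, ψ x ∂μ = - ∫ x in B, g x ∂μ - μ.real (B ∩ U) * ε := by
    simp only [ψ]
    rw [integral_sub hψ1 hψ2, integral_indicator hB, integral_neg,
      integral_indicator_const _ (hB.inter hU), smul_eq_mul]
  have hcompl : ∫ x in Bᶜ, g x ∂μ ≤ 0 :=
    setIntegral_le_of_invariant hC hinv hi hB.compl (by rw [Set.preimage_compl, hBinv])
  have htot : ∫ x, g x ∂μ = 0 := by
    simp only [hg]
    rw [integral_sub hi (integrable_const _), hmax]
    simp
  have hsplit := integral_add_compl hB hgi
  have hBU : 0 < μ.real (B ∩ U) := by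
    have hcons : Conservative shift μ := hT.conservative
    have hae := hcons.ae_mem_imp_frequently_image_mem hU.nullMeasurableSet
    have : μ (B ∩ U) = μ U := by
      apply measure_congr
      filter_upwards [hae] with x hx
      apply propext
      exact ⟨fun h => h.2, fun h => ⟨hx h, h⟩⟩
    rw [Measure.real, this]
    exact ENNReal.toReal_pos hpos.ne' (measure_ne_top _ _)
  have := mul_pos hBU hε
  change 0 ≤ ∫ x, ψ x ∂μ at hkey
  rw [hval] at hkey
  linarith

theorem dist_agree {A : ℕ → ℕ → Bool} {r : ℝ} (hr0 : 0 < r) (hr1 : r < 1) {x z : MarkovShift A}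
    {k : ℕ} (h : dist' r x z < r ^ k) : ∀ i < k, z.1 i = x.1 i := by
  intro i hi
  unfold dist' at h
  split_ifs at h with hxz
  · rw [hxz]
  · have h1 : k < firstDiff x z hxz := (pow_lt_pow_iff_right_of_lt_one₀ hr0 hr1).1 h
    have h2 := Nat.find_min (Function.ne_iff.mp
      (fun hxy : x.1 = z.1 => hxz (Subtype.ext hxy))) (hi.trans h1)
    exact (not_not.1 h2).symm

theorem agree_dist {A : ℕ → ℕ → Bool} {r : ℝ} (hr0 : 0 < r) (hr1 : r < 1) {x z : MarkovShift A}
    {k : ℕ} (h : ∀ i < k, z.1 i = x.1 i) : dist' r x z ≤ r ^ k := by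
  unfold dist'
  split_ifs with hxz
  · positivity
  · refine pow_le_pow_of_le_one hr0.le hr1.le ?_
    unfold firstDiff
    rw [Nat.le_find_iff]
    intro m hm
    exact not_not.2 (h m hm).symm

theorem mane_upper {A : ℕ → ℕ → Bool} {f : MarkovShift A → ℝ} {C : ℝ} (hC : ∀ y, f y ≤ C)
    (hW : SatisfiesWalters f) {x z : MarkovShift A} {n k : ℕ} (hn : 1 ≤ n) (hk : 1 ≤ k)
    (hz : ∀ i < k, z.1 i = x.1 i) (hzx : shift^[n] z = x) :
    birkhoff (fun w => f w - mf f) n z ≤ waltersSup f k := by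
  have hper : ∀ i < k, z.1 (i + n) = z.1 i := by
    intro i hi
    rw [hz i hi, ← hzx, shift_iter_val]
  obtain ⟨q, hq1, hq2⟩ := exists_periodic (A := A) z.1 n hn (fun i _ => z.2 i) (by
    have := hper 0 (by omega)
    rwa [zero_add] at this)
  have hagree : ∀ i, i < n + k → z.1 i = q.1 i := by
    intro i
    induction i using Nat.strong_induction_on with
    | _ i ih =>
      intro hi
      by_cases h : i < n
      · rw [hq2, Nat.mod_eq_of_lt h]
      · obtain ⟨j, rfl⟩ : ∃ j, i = j + n := ⟨i - n, by omega⟩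
        rw [hper j (by omega), ih j (by omega) (by omega), hq2, hq2, Nat.add_mod_right]
  have h1 := (abs_le.1 (walters_bound hW hn hk hagree)).2
  have h2 := birkhoff_periodic_le hC (continuous_of_walters hW) hn hq1
  rw [birkhoff_sub_const]
  linarith

/-- Gluing the first `n` letters of `w` to `x`. -/
theorem exists_glue {A : ℕ → ℕ → Bool} (w x : MarkovShift A) (n : ℕ) (h : w.1 n = x.1 0) :
    ∃ z : MarkovShift A, (∀ i < n, z.1 i = w.1 i) ∧ ∀ i, z.1 (i + n) = x.1 i := by
  have hz : ∀ i, A (if i < n then w.1 i else x.1 (i - n))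
      (if i + 1 < n then w.1 (i + 1) else x.1 (i + 1 - n)) = true := by
    intro i
    by_cases h1 : i + 1 < n
    · simp only [h1, show i < n by omega, if_true]
      exact w.2 i
    · by_cases h2 : i < n
      · simp only [h1, h2, if_true, if_false]
        obtain rfl : n = i + 1 := by omega
        rw [Nat.sub_self, ← h]
        exact w.2 i
      · simp only [h1, h2, if_false]
        rw [show i + 1 - n = i - n + 1 by omega]
        exact x.2 _
  let z : MarkovShift A := ⟨fun i => if i < n then w.1 i else x.1 (i - n), hz⟩
  have hzv : ∀ i, z.1 i = if i < n then w.1 i else x.1 (i - n) := fun i => rfl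
  refine ⟨z, fun i hi => by rw [hzv, if_pos hi], fun i => ?_⟩
  rw [hzv, if_neg (by omega), Nat.add_sub_cancel]

/-- The support of any maximizing measure is contained in the Aubry set
`Ω(f,σ) = {x : S_f(x,x) = 0}`. -/
theorem support_subset_aubry
    (A : ℕ → ℕ → Bool) (r : ℝ) (hr0 : 0 < r) (hr1 : r < 1)
    (hmix : TopologicallyMixing A)
    (hbip : FinitelyPrimitive A)
    (f : MarkovShift A → ℝ)
    (hWalters : SatisfiesWalters f)
    (hVar1 : Var1Finite f)
    (p : ℝ)
    (hPfin : HasGurevichPressure f p) :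
    ∀ μ : Measure (MarkovShift A), IsMaximizing f μ →
      msupport μ ⊆ {x : MarkovShift A | manePot r f x x = 0} := by
  intro μ hμ x hx
  obtain ⟨C, hC⟩ := bounded_above hbip hVar1 hPfin x
  have hf := continuous_of_walters hWalters
  change manePot r f x x = 0
  apply le_antisymm
  · refine EReal.le_of_forall_lt_iff_le.1 fun δ hδ => ?_
    have hδ' : 0 < δ := by exact_mod_cast hδ
    obtain ⟨k, hk1, hk⟩ := walters_small hWalters hδ'
    refine (iInf_le _ ⟨r ^ k, pow_pos hr0 k⟩).trans ?_
    refine iSup_le fun n => iSup_le fun z => ?_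
    have := mane_upper hC hWalters n.2 hk1 (dist_agree hr0 hr1 z.2.1) z.2.2
    exact_mod_cast this.trans (hk k le_rfl).le
  · refine le_iInf fun ε => ?_
    refine EReal.ge_of_forall_gt_iff_ge.1 fun δ hδ => ?_
    have hδ' : 0 < -δ / 2 := by
      have : δ < 0 := by exact_mod_cast hδ
      linarith
    obtain ⟨k₁, hk1, hk⟩ := walters_small hWalters hδ'
    obtain ⟨k₂, hk2⟩ := exists_pow_lt_of_lt_one ε.2 hr1
    set k := max k₁ k₂ with hkdef
    have hkpos : 1 ≤ k := hk1.trans (le_max_left _ _)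
    have hopen := isOpen_cylOf x k
    obtain ⟨w, hw, n, hn, hwn, hwb⟩ := exists_return hC hf hμ hopen.measurableSet
      (hx _ hopen (fun i _ => rfl)) hδ'
    have hwn' : ∀ i < k, w.1 (i + n) = x.1 i := by
      intro i hi
      rw [← shift_iter_val]
      exact hwn i hi
    obtain ⟨z, hz1, hz2⟩ := exists_glue w x n (by
      have := hwn' 0 hkpos
      rwa [zero_add] at this)
    have hagree : ∀ i < n + k, z.1 i = w.1 i := by
      intro i hi
      by_cases h : i < n
      · exact hz1 i h
      · obtain ⟨j, rfl⟩ : ∃ j, i = j + n := ⟨i - n, by omega⟩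
        rw [hz2, hwn' j (by omega)]
    have hzx : shift^[n] z = x := by
      apply Subtype.ext
      funext i
      rw [shift_iter_val, hz2]
    have hzd : dist' r x z < ε.1 := by
      refine (agree_dist hr0 hr1 (k := k) fun i hi => ?_).trans_lt
        ((pow_le_pow_of_le_one hr0.le hr1.le (le_max_right _ _)).trans_lt hk2)
      rw [hagree i (by omega)]
      exact hw i hi
    have hb := (abs_le.1 (walters_bound hWalters hn hkpos hagree)).1
    have hkk := hk k (le_max_left _ _)
    have hfin : δ ≤ birkhoff (fun w => f w - mf f) n z := by
      rw [birkhoff_sub_const] at hwb ⊢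
      linarith
    refine le_trans (EReal.coe_le_coe_iff.2 hfin) ?_
    exact le_iSup_of_le ⟨n, hn⟩ (le_iSup_of_le ⟨z, hzd, hzx⟩ le_rfl)

end MarkovShift
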